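/- Consider the linearization about a steady state (ζ₀, v₀) (constant real values) of the model in which only the fifth-order derivative is factorized (α = 1): ∂_t ζ̃ + (h₀ + ζ₀) ∂_x ṽ + v₀ ∂_x ζ̃ = 0 and (1 + 𝒯[0] − 𝔗)(∂_t ṽ + v₀ ∂_x ṽ) + g ∂_x ζ̃ + (2/45) g ∂_x⁴ φ + (2/3) g ζ₀ ∂_x³ ζ̃ = 0, where φ satisfies φ − (1/3) ∂_x² φ = ∂_x ζ̃. Let g>0, h₀ + ζ₀ > 0, and let k,w be real with k≠0. If ζ̃(t,x) = ζ̄ e^{i(kx−wt)}, ṽ(t,x) = v̄ e^{i(kx−wt)} and φ(t,x) = φ̄ e^{i(kx−wt)} with complex amplitudes ζ̄ ≠ 0, v̄, φ̄ satisfy all three equations for all (t,x) ∈ ℝ², then (w − k v₀)² / (g (h₀ + ζ₀) k²) = (1 − (2/3) k² ζ₀ + (k⁴/45)·(2/(1 + (1/3) k²))) / (1 + (1/3) k² + (1/45) k⁴). -/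

import Mathlib

/-!
On a plane wave, `∂_x` acts as multiplication by `ik` and `∂_t` as multiplication by `-iw`, so
evaluating the three equations at the origin gives a linear system for the amplitudes. With
`A = w - k v₀`, `H = h₀ + ζ₀`, `P = 1 + k²/3` and `D = 1 + k²/3 + k⁴/45` it reads
`A ζ̄ = H k v̄`, `P φ̄ = i k ζ̄` and
`D A v̄ = g k ζ̄ - (2/45) i g k⁴ φ̄ - (2/3) g ζ₀ k³ ζ̄`.
Eliminating `v̄` and `φ̄` and cancelling `ζ̄ ≠ 0` gives the dispersion relation, after division by
the positive quantities `P`, `D` and `g H k²`.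
-/

lemma deriv_planeWave_x (c : ℂ) (k w t : ℝ) :
    deriv (fun y : ℝ => c * Complex.exp (Complex.I * ((k : ℂ) * y - (w : ℂ) * t)))
      = fun y : ℝ => (c * (Complex.I * k)) *
          Complex.exp (Complex.I * ((k : ℂ) * y - (w : ℂ) * t)) := by
  funext y
  have h0 : HasDerivAt (fun y : ℝ => (y : ℂ)) 1 y := Complex.ofRealCLM.hasDerivAt
  have h := ((((h0.const_mul (k : ℂ)).sub_const ((w : ℂ) * t)).const_mul
    Complex.I).cexp).const_mul c
  rw [h.deriv]
  ring

lemma deriv_planeWave_t (c : ℂ) (k w x t : ℝ) :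
    deriv (fun s : ℝ => c * Complex.exp (Complex.I * ((k : ℂ) * x - (w : ℂ) * s))) t
      = (c * (-Complex.I * w)) * Complex.exp (Complex.I * ((k : ℂ) * x - (w : ℂ) * t)) := by
  have h0 : HasDerivAt (fun y : ℝ => (y : ℂ)) 1 t := Complex.ofRealCLM.hasDerivAt
  have h := ((((h0.const_mul (w : ℂ)).const_sub ((k : ℂ) * x)).const_mul
    Complex.I).cexp).const_mul c
  rw [h.deriv]
  ring

lemma iteratedDeriv_planeWave_x (n : ℕ) (c : ℂ) (k w t : ℝ) :
    iteratedDeriv n (fun y : ℝ => c * Complex.exp (Complex.I * ((k : ℂ) * y - (w : ℂ) * t)))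
      = fun y : ℝ => (c * (Complex.I * k) ^ n) *
          Complex.exp (Complex.I * ((k : ℂ) * y - (w : ℂ) * t)) := by
  induction n with
  | zero => simp
  | succ n ih =>
    rw [iteratedDeriv_succ, ih, deriv_planeWave_x]
    funext y
    ring

/-- Linearization about a constant steady state `(ζ₀, v₀)` of the model in which only
the fifth-order derivative is factorized (α = 1): plane-wave solutions satisfy
`(w − k v₀)²/(g(h₀+ζ₀)k²)
  = (1 − (2/3)k²ζ₀ + (k⁴/45)(2/(1 + (1/3)k²))) / (1 + (1/3)k² + (1/45)k⁴)`. -/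
theorem stmt17 (g h₀ ζ₀ v₀ k w : ℝ) (ζbar vbar φbar : ℂ)
    (hg : 0 < g) (hh : 0 < h₀ + ζ₀) (hk : k ≠ 0) (hζbar : ζbar ≠ 0)
    (ζ v φ : ℝ → ℝ → ℂ)
    (hζdef : ∀ t x : ℝ, ζ t x = ζbar * Complex.exp (Complex.I * ((k : ℂ) * x - (w : ℂ) * t)))
    (hvdef : ∀ t x : ℝ, v t x = vbar * Complex.exp (Complex.I * ((k : ℂ) * x - (w : ℂ) * t)))
    (hφdef : ∀ t x : ℝ, φ t x = φbar * Complex.exp (Complex.I * ((k : ℂ) * x - (w : ℂ) * t)))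
    -- first equation: ∂_t ζ̃ + (h₀ + ζ₀) ∂_x ṽ + v₀ ∂_x ζ̃ = 0
    (heq1 : ∀ t x : ℝ, deriv (fun s => ζ s x) t
      + ((h₀ + ζ₀ : ℝ) : ℂ) * deriv (fun y => v t y) x
      + (v₀ : ℂ) * deriv (fun y => ζ t y) x = 0)
    -- second equation: (1 + 𝒯[0] − 𝔗)(∂_t ṽ + v₀ ∂_x ṽ) + g ∂_x ζ̃
    --                  + (2/45) g ∂_x⁴ φ + (2/3) g ζ₀ ∂_x³ ζ̃ = 0
    (heq2 : ∀ t x : ℝ,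
      (fun E : ℝ → ℂ =>
          E x - (1 / 3 : ℂ) * iteratedDeriv 2 E x + (1 / 45 : ℂ) * iteratedDeriv 4 E x)
        (fun y => deriv (fun s => v s y) t + (v₀ : ℂ) * deriv (fun y' => v t y') y)
      + (g : ℂ) * deriv (fun y => ζ t y) x
      + ((2 / 45 * g : ℝ) : ℂ) * iteratedDeriv 4 (fun y => φ t y) x
      + ((2 / 3 * g * ζ₀ : ℝ) : ℂ) * iteratedDeriv 3 (fun y => ζ t y) x = 0)
    -- auxiliary elliptic equation: φ − (1/3) ∂_x² φ = ∂_x ζ̃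
    (heq3 : ∀ t x : ℝ,
      φ t x - (1 / 3 : ℂ) * iteratedDeriv 2 (fun y => φ t y) x
        = deriv (fun y => ζ t y) x) :
    (w - k * v₀) ^ 2 / (g * (h₀ + ζ₀) * k ^ 2)
      = (1 - 2 / 3 * k ^ 2 * ζ₀ + k ^ 4 / 45 * (2 / (1 + 1 / 3 * k ^ 2)))
        / (1 + 1 / 3 * k ^ 2 + 1 / 45 * k ^ 4) := by
  have e1 := heq1 0 0
  have e2 := heq2 0 0
  have e3 := heq3 0 0
  -- The argument `∂_t ṽ + v₀ ∂_x ṽ` of the dispersive operator is again a plane wave.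
  have hE : (fun y : ℝ => deriv (fun s => v s y) 0 + (v₀ : ℂ) * deriv (fun y' => v 0 y') y)
      = fun y : ℝ => (vbar * (-Complex.I * w + v₀ * (Complex.I * k))) *
          Complex.exp (Complex.I * ((k : ℂ) * y - (w : ℂ) * (0 : ℝ))) := by
    funext y
    simp only [hvdef, deriv_planeWave_t, deriv_planeWave_x]
    ring
  rw [hE] at e2
  simp only [hζdef, hvdef, hφdef, deriv_planeWave_t, deriv_planeWave_x,
    iteratedDeriv_planeWave_x] at e1 e2 e3
  have hI2 : Complex.I ^ 2 = -1 := Complex.I_sq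
  have hI3 : Complex.I ^ 3 = -Complex.I := Complex.I_pow_three
  have hI4 : Complex.I ^ 4 = 1 := Complex.I_pow_four
  simp only [mul_pow, hI2, hI3, hI4, Complex.ofReal_zero, mul_zero, sub_zero, Complex.exp_zero,
    mul_one] at e1 e2 e3
  push_cast at e1 e2 e3
  have key : ((1 + 1 / 3 * k ^ 2 + 1 / 45 * k ^ 4) * (1 + 1 / 3 * k ^ 2) * (w - k * v₀) ^ 2 : ℂ)
      = g * (h₀ + ζ₀) * k ^ 2 * ((1 - 2 / 3 * k ^ 2 * ζ₀) * (1 + 1 / 3 * k ^ 2)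
          + 2 / 45 * k ^ 4) := by
    apply mul_left_cancel₀ hζbar
    linear_combination
      (1 + 1 / 3 * k ^ 2 + 1 / 45 * k ^ 4 : ℂ) * (1 + 1 / 3 * k ^ 2) * (w - k * v₀)
          * Complex.I * e1
        + (1 + 1 / 3 * k ^ 2 : ℂ) * (h₀ + ζ₀) * k * Complex.I * e2
        - 2 / 45 * g * k ^ 5 * (h₀ + ζ₀) * Complex.I * e3
        -- clears the `I ^ 2` produced by the three terms above
        + ((1 + 1 / 3 * k ^ 2 + 1 / 45 * k ^ 4 : ℂ) * (1 + 1 / 3 * k ^ 2 : ℂ) * (w - k * v₀) ^ 2 * ζbar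
          - (1 + 1 / 3 * k ^ 2 : ℂ) * (h₀ + ζ₀) * k * (g * k - 2 / 3 * g * ζ₀ * k ^ 3) * ζbar
          - 2 / 45 * g * k ^ 6 * (h₀ + ζ₀) * ζbar) * hI2
  have keyR : (1 + 1 / 3 * k ^ 2 + 1 / 45 * k ^ 4) * (1 + 1 / 3 * k ^ 2) * (w - k * v₀) ^ 2
      = g * (h₀ + ζ₀) * k ^ 2 * ((1 - 2 / 3 * k ^ 2 * ζ₀) * (1 + 1 / 3 * k ^ 2)
          + 2 / 45 * k ^ 4) := by
    apply Complex.ofReal_injective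
    push_cast
    exact key
  have hP : 0 < 1 + 1 / 3 * k ^ 2 := by positivity
  have hD : 0 < 1 + 1 / 3 * k ^ 2 + 1 / 45 * k ^ 4 := by positivity
  have hK : 0 < g * (h₀ + ζ₀) * k ^ 2 := by positivity
  have hnum : 1 - 2 / 3 * k ^ 2 * ζ₀ + k ^ 4 / 45 * (2 / (1 + 1 / 3 * k ^ 2))
      = ((1 - 2 / 3 * k ^ 2 * ζ₀) * (1 + 1 / 3 * k ^ 2) + 2 / 45 * k ^ 4)
        / (1 + 1 / 3 * k ^ 2) := by
    rw [eq_div_iff hP.ne', add_mul, mul_assoc (k ^ 4 / 45), div_mul_cancel₀ _ hP.ne']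
    ring
  rw [hnum, div_div, div_eq_div_iff hK.ne' (by positivity)]
  linear_combination keyR
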